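/- Assume each indirect utility U_i : [0,1] → [0,∞) is piecewise constant with finitely many discontinuity points and upper semicontinuous, and let Z be the union over i of the discontinuity points of U_i. Then for every feasible bi-event post-processing plan χ there exists a feasible bi-event post-processing plan χ† whose objective value in LP-TwoStep+ is at least that of χ and such that χ†_{i,j}(q,p) > 0 implies p ∈ Z ∪ {θ_1,…,θ_n}. -/

import Mathlib

open Finset

noncomputable section

namespace PersuasiveCalibration

/-- The environment of the persuasive calibration problem: `n` events with
probabilities `lam i > 0` summing to one and sorted expected outcomes `theta i ∈ [0,1]`. -/
structure Setup (n : ℕ) : Type where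
  lam : Fin n → ℝ
  theta : Fin n → ℝ
  lam_pos : ∀ i, 0 < lam i
  lam_sum : ∑ i, lam i = 1
  theta_mono : Monotone theta
  theta_mem : ∀ i, theta i ∈ Set.Icc (0 : ℝ) 1

variable {n : ℕ}

/-- A finitely supported probability distribution on `[0,1]`. -/
def IsDist (μ : ℝ →₀ ℝ) : Prop :=
  (∀ p, 0 ≤ μ p) ∧ (∀ p ∈ μ.support, p ∈ Set.Icc (0 : ℝ) 1) ∧ (∑ p ∈ μ.support, μ p) = 1

/-- A predictor assigns to each event a finitely supported probability distribution on `[0,1]`. -/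
def IsPredictor (f : Fin n → ℝ →₀ ℝ) : Prop := ∀ i, IsDist (f i)

/-- The (unconditional) prediction space of a predictor. -/
def suppF (f : Fin n → ℝ →₀ ℝ) : Finset ℝ := Finset.univ.biUnion fun i => (f i).support

/-- The marginalized predictor `f(p) = ∑ i, λ i * f i p`. -/
def marginal (S : Setup n) (f : Fin n → ℝ →₀ ℝ) (p : ℝ) : ℝ := ∑ i, S.lam i * f i p

/-- The true expected outcome conditional on the prediction `p`. -/
def kappa (S : Setup n) (f : Fin n → ℝ →₀ ℝ) (p : ℝ) : ℝ :=
  (∑ i, S.lam i * f i p * S.theta i) / marginal S f p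

/-- The `ℓ_t`-norm expected calibration error of a predictor. -/
def ECE (S : Setup n) (t : ℝ) (f : Fin n → ℝ →₀ ℝ) : ℝ :=
  (∑ p ∈ suppF f, marginal S f p * |kappa S f p - p| ^ t) ^ (1 / t)

/-- The principal's expected payoff from predictor `f` with indirect utilities `U i`. -/
def payoff (S : Setup n) (U : Fin n → ℝ → ℝ) (f : Fin n → ℝ →₀ ℝ) : ℝ :=
  ∑ i, S.lam i * ∑ p ∈ (f i).support, f i p * U i p

/-- The principal's payoff in the event-independent setting. -/
def payoffEI (S : Setup n) (U : ℝ → ℝ) (f : Fin n → ℝ →₀ ℝ) : ℝ :=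
  payoff S (fun _ => U) f

/-- A predictor is perfectly calibrated if `κ(q) = q` on its support. -/
def PerfectlyCalibrated (S : Setup n) (g : Fin n → ℝ →₀ ℝ) : Prop :=
  ∀ q ∈ suppF g, kappa S g q = q

/-- An event-independent post-processing plan: a finitely supported probability
distribution on `[0,1] × [0,1]`; the first coordinate is `q`, the second is `p`. -/
def IsPlan (χ : ℝ × ℝ →₀ ℝ) : Prop :=
  (∀ x, 0 ≤ χ x) ∧ (∀ x ∈ χ.support, x.1 ∈ Set.Icc (0 : ℝ) 1 ∧ x.2 ∈ Set.Icc (0 : ℝ) 1) ∧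
    (∑ x ∈ χ.support, χ x) = 1

/-- The `ℓ_t` calibration cost `∑ χ(q,p) |q - p|^t` of a plan. -/
def planCost (t : ℝ) (χ : ℝ × ℝ →₀ ℝ) : ℝ := ∑ x ∈ χ.support, χ x * |x.1 - x.2| ^ t

/-- The `q`-marginal `∑_p χ(q, p)` of a plan. -/
def planMargQ (χ : ℝ × ℝ →₀ ℝ) (q : ℝ) : ℝ :=
  ∑ x ∈ χ.support.filter fun x => x.1 = q, χ x

/-- Feasibility of a post-processing plan for a perfectly calibrated predictor `g` and
an `ℓ_t` ECE budget `ε`. -/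
def FeasiblePlan (S : Setup n) (t ε : ℝ) (g : Fin n → ℝ →₀ ℝ) (χ : ℝ × ℝ →₀ ℝ) : Prop :=
  planCost t χ ≤ ε ^ t ∧ ∀ q, planMargQ χ q = marginal S g q

/-- The value `f_i(p) = ∑_q (g̃_i(q)/g(q)) χ(q,p)` of the predictor generated by `(g̃, χ)`. -/
def genVal (S : Setup n) (g : Fin n → ℝ →₀ ℝ) (χ : ℝ × ℝ →₀ ℝ) (i : Fin n) (p : ℝ) : ℝ :=
  ∑ q ∈ suppF g, g i q / marginal S g q * χ (q, p)

/-- A predictor generated by some perfectly calibrated predictor and some feasible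
event-independent post-processing plan. -/
def IsGenerated (S : Setup n) (t ε : ℝ) (f : Fin n → ℝ →₀ ℝ) : Prop :=
  ∃ (g : Fin n → ℝ →₀ ℝ) (χ : ℝ × ℝ →₀ ℝ),
    IsPredictor g ∧ PerfectlyCalibrated S g ∧ IsPlan χ ∧ FeasiblePlan S t ε g χ ∧
      ∀ i p, f i p = genVal S g χ i p

/-- The CDF of a finitely supported distribution. -/
def cdf (μ : ℝ →₀ ℝ) (x : ℝ) : ℝ := ∑ q ∈ μ.support.filter fun q => q ≤ x, μ q

/-- The CDF of the distribution placing mass `λ_i` at `θ_i`. -/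
def priorCdf (S : Setup n) (x : ℝ) : ℝ :=
  ∑ i ∈ Finset.univ.filter fun i => S.theta i ≤ x, S.lam i

/-- `μ` is a mean-preserving contraction of the distribution putting mass `λ_i` on `θ_i`. -/
def MPCprior (S : Setup n) (μ : ℝ →₀ ℝ) : Prop :=
  (∀ s ∈ Set.Icc (0 : ℝ) 1,
      (∫ x in (0 : ℝ)..s, cdf μ x) ≤ ∫ x in (0 : ℝ)..s, priorCdf S x) ∧
    (∫ x in (0 : ℝ)..(1 : ℝ), cdf μ x) = ∫ x in (0 : ℝ)..(1 : ℝ), priorCdf S x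

/-- The objective `∑ χ(q,p) U(p)` of the program LP-TwoStep. -/
def LPobj (U : ℝ → ℝ) (χ : ℝ × ℝ →₀ ℝ) : ℝ := ∑ x ∈ χ.support, χ x * U x.2

/-- Feasibility for the program LP-TwoStep. -/
def LPFeasible (S : Setup n) (ε t : ℝ) (χ : ℝ × ℝ →₀ ℝ) (g : ℝ →₀ ℝ) : Prop :=
  (∀ x, 0 ≤ χ x) ∧
  (∀ x ∈ χ.support, x.1 ∈ Set.Icc (0 : ℝ) 1 ∧ x.2 ∈ Set.Icc (0 : ℝ) 1) ∧
  planCost t χ ≤ ε ^ t ∧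
  (∀ q, planMargQ χ q = g q) ∧ IsDist g ∧ MPCprior S g

/-- The optimal value of LP-TwoStep. -/
def OPTLP (S : Setup n) (ε t : ℝ) (U : ℝ → ℝ) : ℝ :=
  sSup {v | ∃ (χ : ℝ × ℝ →₀ ℝ) (g : ℝ →₀ ℝ), LPFeasible S ε t χ g ∧ v = LPobj U χ}

/-- Symmetric linear-tailed convex function with linear tails `[0, xL]`, `[xH, 1]` and
tail slopes `s1`, `s2` of equal absolute value. -/
def SymLinTailedConvex (Γ : ℝ → ℝ) (xL xH s1 s2 : ℝ) : Prop :=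
  ConvexOn ℝ (Set.Icc (0 : ℝ) 1) Γ ∧ 0 ≤ xL ∧ xL ≤ xH ∧ xH ≤ 1 ∧ |s1| = |s2| ∧
    (∃ c1, ∀ x ∈ Set.Icc (0 : ℝ) xL, Γ x = c1 + s1 * x) ∧
    (∃ c2, ∀ x ∈ Set.Icc xH (1 : ℝ), Γ x = c2 + s2 * x)

/-- Tuples `(i, j, q, p)` indexing a bi-event post-processing plan. -/
abbrev BiTuple (n : ℕ) := Fin n × Fin n × ℝ × ℝ

/-- The contribution ratio `r_{i,j}(q)`. -/
def ratio (S : Setup n) (i j : Fin n) (q : ℝ) : ℝ :=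
  if S.theta i < S.theta j then (S.theta j - q) / (S.theta j - S.theta i) else 1

/-- The contribution of the tuple `x = (i', j', q, p)` to event `i`:
`r_{i,j'}(q)` if `i' = i`, and `1 - r_{i',i}(q)` if `j' = i ≠ i'`. -/
def contrib (S : Setup n) (x : BiTuple n) (i : Fin n) : ℝ :=
  (if x.1 = i then ratio S x.1 x.2.1 x.2.2.1 else 0) +
    (if x.2.1 = i ∧ x.1 ≠ i then 1 - ratio S x.1 x.2.1 x.2.2.1 else 0)

/-- A bi-event post-processing plan. -/
def IsBiPlan (S : Setup n) (χ : BiTuple n →₀ ℝ) : Prop :=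
  (∀ x, 0 ≤ χ x) ∧
    ∀ x ∈ χ.support, x.1 ≤ x.2.1 ∧ x.2.2.1 ∈ Set.Icc (0 : ℝ) 1 ∧
      x.2.2.2 ∈ Set.Icc (0 : ℝ) 1 ∧ S.theta x.1 ≤ x.2.2.1 ∧ x.2.2.1 ≤ S.theta x.2.1

/-- Feasibility of a bi-event post-processing plan for `ℓ_t` ECE budget `ε`. -/
def FeasibleBiPlan (S : Setup n) (t ε : ℝ) (χ : BiTuple n →₀ ℝ) : Prop :=
  IsBiPlan S χ ∧
    (∑ x ∈ χ.support, χ x * |x.2.2.1 - x.2.2.2| ^ t) ≤ ε ^ t ∧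
    ∀ i, (∑ x ∈ χ.support, χ x * contrib S x i) = S.lam i

/-- The value `f_i(p)` of the predictor generated by a bi-event post-processing plan. -/
def genValBi (S : Setup n) (χ : BiTuple n →₀ ℝ) (i : Fin n) (p : ℝ) : ℝ :=
  1 / S.lam i * ∑ x ∈ χ.support.filter fun x => x.2.2.2 = p, χ x * contrib S x i

/-- The objective of LP-TwoStep+: `∑ χ_{i,j}(q,p) U_{i,j}(q,p)`. -/
def biObj (S : Setup n) (U : Fin n → ℝ → ℝ) (χ : BiTuple n →₀ ℝ) : ℝ :=
  ∑ x ∈ χ.support, χ x * (ratio S x.1 x.2.1 x.2.2.1 * U x.1 x.2.2.2 +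
    (1 - ratio S x.1 x.2.1 x.2.2.1) * U x.2.1 x.2.2.2)

/-- The optimal value of LP-TwoStep+. -/
def OPTBi (S : Setup n) (U : Fin n → ℝ → ℝ) (t ε : ℝ) : ℝ :=
  sSup {v | ∃ χ : BiTuple n →₀ ℝ, FeasibleBiPlan S t ε χ ∧ v = biObj S U χ}

/-- `U` is piecewise constant with all its discontinuity points in `Z`. -/
def PiecewiseConstWrt (Z : Finset ℝ) (U : ℝ → ℝ) : Prop :=
  ∀ x ∈ Set.Icc (0 : ℝ) 1, ∀ y ∈ Set.Icc (0 : ℝ) 1,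
    (∀ z ∈ Z, z ∉ Set.uIcc x y) → U x = U y

/-- The bound `S = ⌈2 ln(1/δ) / ln(1+δ)⌉` of the second discretization layer. -/
def Sbound (δ : ℝ) : ℕ := ⌈2 * Real.log (1 / δ) / Real.log (1 + δ)⌉₊

/-- The instance-dependent two-layer discretized set `S_δ`. -/
def gridSet (S : Setup n) (Z : Finset ℝ) (ε t δ : ℝ) : Set ℝ :=
  ({x : ℝ | ∃ k : ℕ, x = (k : ℝ) * δ} ∪ {(1 : ℝ)} ∪ Set.range S.theta ∪ (↑Z : Set ℝ) ∪
      {x : ℝ | ∃ z ∈ (↑Z : Set ℝ) ∪ Set.range S.theta, ∃ s : ℕ, s ≤ Sbound δ ∧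
        (x = z + (ε ^ t * δ * (1 + δ) ^ s) ^ (1 / t) ∨
          x = z - (ε ^ t * δ * (1 + δ) ^ s) ^ (1 / t))}) ∩
    Set.Icc (0 : ℝ) 1

/-- Feasibility for the discretized program LP-DiscTwoStep+. -/
def DiscFeasibleBiPlan (S : Setup n) (Z : Finset ℝ) (t ε δ : ℝ) (χ : BiTuple n →₀ ℝ) : Prop :=
  FeasibleBiPlan S t ε χ ∧
    ∀ x ∈ χ.support, x.2.2.1 ∈ gridSet S Z ε t δ ∧ x.2.2.2 ∈ gridSet S Z ε t δ

/-- The optimal value of LP-DiscTwoStep+. -/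
def OPTBiDisc (S : Setup n) (U : Fin n → ℝ → ℝ) (Z : Finset ℝ) (t ε δ : ℝ) : ℝ :=
  sSup {v | ∃ χ : BiTuple n →₀ ℝ, DiscFeasibleBiPlan S Z t ε δ χ ∧ v = biObj S U χ}

/-- A Bayesian persuasion instance with signal-dependent bias: states `θ_i` with
prior `λ`, actions `A`, sender utility `u a i = u(a, θ_i) ≥ 0`, and receiver utility
determined by `v1 a = v(a,1)` and `v0 a = v(a,0)`. -/
structure PSetup (n : ℕ) (A : Type*) : Type _ where
  lam : Fin n → ℝ
  theta : Fin n → ℝ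
  u : A → Fin n → ℝ
  v1 : A → ℝ
  v0 : A → ℝ
  lam_pos : ∀ i, 0 < lam i
  lam_sum : ∑ i, lam i = 1
  theta_mem : ∀ i, theta i ∈ Set.Icc (0 : ℝ) 1
  u_nonneg : ∀ a i, 0 ≤ u a i

variable {A σT : Type*}

/-- The receiver's utility from action `a` at belief mean `x`. -/
def rcvU (P : PSetup n A) (a : A) (x : ℝ) : ℝ := x * P.v1 a + (1 - x) * P.v0 a

/-- The total probability `m(σ)` of a signal `σ`. -/
def mass [Fintype σT] (P : PSetup n A) (π : Fin n → σT → ℝ) (σ : σT) : ℝ :=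
  ∑ i, P.lam i * π i σ

/-- The biased posterior mean `p(σ)` of the receiver upon signal `σ`. -/
def belief [Fintype σT] (P : PSetup n A) (π : Fin n → σT → ℝ) (b : σT → ℝ) (σ : σT) : ℝ :=
  (b σ + ∑ i, P.lam i * π i σ * P.theta i) / mass P π σ

/-- Validity of a sender strategy `(π, b)`. -/
def ValidStrategy [Fintype σT] (P : PSetup n A) (π : Fin n → σT → ℝ) (b : σT → ℝ) : Prop :=
  (∀ i σ, 0 ≤ π i σ) ∧ (∀ i, ∑ σ, π i σ = 1) ∧
    ∀ σ, 0 < mass P π σ → belief P π b σ ∈ Set.Icc (0 : ℝ) 1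

/-- `astar` is a receiver best-response selection for the strategy `(π, b)`. -/
def BestResponse [Fintype σT] (P : PSetup n A) (π : Fin n → σT → ℝ) (b : σT → ℝ)
    (astar : σT → A) : Prop :=
  ∀ σ, 0 < mass P π σ → ∀ a, rcvU P a (belief P π b σ) ≤ rcvU P (astar σ) (belief P π b σ)

/-- The bounded-rationality constraint on the total bias. -/
def BRconstraint [Fintype σT] (P : PSetup n A) (t ε : ℝ) (π : Fin n → σT → ℝ)
    (b : σT → ℝ) : Prop :=
  (∑ σ, mass P π σ * |b σ / mass P π σ| ^ t) ^ (1 / t) ≤ ε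

/-- The sender's expected payoff from strategy `π` with receiver selection `astar`. -/
def senderPayoff [Fintype σT] (P : PSetup n A) (π : Fin n → σT → ℝ) (astar : σT → A) : ℝ :=
  ∑ i, P.lam i * ∑ σ, π i σ * P.u (astar σ) i

/-- Feasibility for the action-recommendation program P-ActRec. -/
def PActRecFeasible [Fintype A] (P : PSetup n A) (t ε : ℝ)
    (π : Fin n → A → ℝ) (b : A → ℝ) : Prop :=
  (∀ i a, 0 ≤ π i a) ∧ (∀ i, ∑ a, π i a = 1) ∧
  (∀ a, mass P π a = 0 → b a = 0) ∧
  (∑ a, mass P π a * |b a / mass P π a| ^ t) ≤ ε ^ t ∧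
  (∀ a, 0 ≤ b a + ∑ i, P.lam i * π i a * P.theta i) ∧
  (∀ a, b a + ∑ i, P.lam i * π i a * P.theta i ≤ mass P π a) ∧
  ∀ a a' : A,
    (b a + ∑ i, P.lam i * π i a * P.theta i) * P.v1 a' +
        (mass P π a - (b a + ∑ i, P.lam i * π i a * P.theta i)) * P.v0 a' ≤
      (b a + ∑ i, P.lam i * π i a * P.theta i) * P.v1 a +
        (mass P π a - (b a + ∑ i, P.lam i * π i a * P.theta i)) * P.v0 a

/-- The sender-side marginal probability of recommendation `a` (calibration model). -/
def pmass [Fintype A] (S : Setup n) (π : Fin n → A → ℝ) (a : A) : ℝ := ∑ i, S.lam i * π i a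

/-- The biased posterior mean associated with recommendation `a` (calibration model). -/
def pbelief [Fintype A] (S : Setup n) (π : Fin n → A → ℝ) (b : A → ℝ) (a : A) : ℝ :=
  (b a + ∑ i, S.lam i * π i a * S.theta i) / pmass S π a

/-- linear functional on plans -/
def lin {n : ℕ} (f : BiTuple n → ℝ) : (BiTuple n →₀ ℝ) →ₗ[ℝ] ℝ := Finsupp.linearCombination ℝ f

theorem lin_eq {n : ℕ} (f : BiTuple n → ℝ) (χ : BiTuple n →₀ ℝ) :
    lin f χ = ∑ x ∈ χ.support, χ x * f x := by
  simp [lin, Finsupp.linearCombination_apply, Finsupp.sum]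

theorem usc_move (Z : Finset ℝ) (U : ℝ → ℝ) (hpc : PiecewiseConstWrt Z U)
    (husc : UpperSemicontinuousOn U (Set.Icc (0 : ℝ) 1)) (p z : ℝ)
    (hp : p ∈ Set.Icc (0 : ℝ) 1) (hz : z ∈ Set.Icc (0 : ℝ) 1)
    (h : ∀ w ∈ Z, w ∈ Set.uIcc p z → w = z) : U p ≤ U z := by
  by_contra hlt
  push Not at hlt
  have hpz : p ≠ z := by rintro rfl; exact lt_irrefl _ hlt
  have hev := husc z hz (U p) hlt
  rw [eventually_nhdsWithin_iff, Metric.eventually_nhds_iff] at hev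
  obtain ⟨δ, hδ, hd⟩ := hev
  obtain ⟨s, hs0, hs1, hsd⟩ : ∃ s : ℝ, 0 < s ∧ s ≤ 1 ∧ s * |p - z| < δ := by
    have ha : 0 < |p - z| := abs_pos.2 (sub_ne_zero.2 hpz)
    refine ⟨min 1 (δ / (2 * |p - z|)), by positivity, min_le_left _ _, ?_⟩
    calc _ ≤ δ / (2 * |p - z|) * |p - z| := by gcongr; exact min_le_right _ _
      _ = δ / 2 := by field_simp
      _ < δ := by linarith
  have hx01 : z + s * (p - z) ∈ Set.Icc (0 : ℝ) 1 := by
    obtain ⟨h1, h2⟩ := hp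
    obtain ⟨h3, h4⟩ := hz
    constructor <;> nlinarith
  have hlt2 := hd (y := z + s * (p - z)) (by
    rw [Real.dist_eq, add_sub_cancel_left, abs_mul, abs_of_pos hs0]; exact hsd) hx01
  have heq := hpc p hp _ hx01 (by
    intro w hw hwm
    rcases lt_or_gt_of_ne hpz with hc | hc
    · have h1 : p ≤ z + s * (p - z) := by nlinarith
      have h2 : z + s * (p - z) < z := by nlinarith
      rw [Set.uIcc_of_le h1] at hwm
      have := h w hw (by rw [Set.uIcc_of_le hc.le]; exact ⟨hwm.1, hwm.2.trans h2.le⟩)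
      linarith [hwm.2]
    · have h1 : z + s * (p - z) ≤ p := by nlinarith
      have h2 : z < z + s * (p - z) := by nlinarith
      rw [Set.uIcc_of_ge h1] at hwm
      have := h w hw (by rw [Set.uIcc_of_ge hc.le]; exact ⟨h2.le.trans hwm.1, hwm.2⟩)
      linarith [hwm.1])
  linarith

/-- Structural validity of a tuple. -/
def OkT {n : ℕ} (S : Setup n) (x : BiTuple n) : Prop :=
  x.1 ≤ x.2.1 ∧ x.2.2.1 ∈ Set.Icc (0 : ℝ) 1 ∧
      x.2.2.2 ∈ Set.Icc (0 : ℝ) 1 ∧ S.theta x.1 ≤ x.2.2.1 ∧ x.2.2.1 ≤ S.theta x.2.1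

/-- The utility of a tuple. -/
def utilT {n : ℕ} (S : Setup n) (U : Fin n → ℝ → ℝ) (x : BiTuple n) : ℝ :=
  ratio S x.1 x.2.1 x.2.2.1 * U x.1 x.2.2.2 +
    (1 - ratio S x.1 x.2.1 x.2.2.1) * U x.2.1 x.2.2.2

theorem ratio_mem {n : ℕ} (S : Setup n) (i j : Fin n) (q : ℝ)
    (h1 : S.theta i ≤ q) (h2 : q ≤ S.theta j) : 0 ≤ ratio S i j q ∧ ratio S i j q ≤ 1 := by
  unfold ratio
  split_ifs with h
  · have : 0 < S.theta j - S.theta i := by linarith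
    exact ⟨div_nonneg (by linarith) this.le, (div_le_one this).2 (by linarith)⟩
  · norm_num

theorem split_tuple {n : ℕ} (S : Setup n) (t : ℝ) (ht : 1 ≤ t)
    (U : Fin n → ℝ → ℝ) (Z : Finset ℝ)
    (hpc : ∀ i, PiecewiseConstWrt Z (U i))
    (husc : ∀ i, UpperSemicontinuousOn (U i) (Set.Icc (0 : ℝ) 1))
    (x : BiTuple n) (hx : OkT S x) :
    ∃ (a b : BiTuple n) (α β : ℝ), 0 ≤ α ∧ 0 ≤ β ∧ OkT S a ∧ OkT S b ∧
      a.2.2.2 ∈ (↑Z : Set ℝ) ∪ Set.range S.theta ∧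
      b.2.2.2 ∈ (↑Z : Set ℝ) ∪ Set.range S.theta ∧
      α * |a.2.2.1 - a.2.2.2| ^ t + β * |b.2.2.1 - b.2.2.2| ^ t ≤ |x.2.2.1 - x.2.2.2| ^ t ∧
      (∀ i, α * contrib S a i + β * contrib S b i = contrib S x i) ∧
      utilT S U x ≤ α * utilT S U a + β * utilT S U b := by
  classical
  obtain ⟨i, j, q, p⟩ := x
  obtain ⟨hij, hq, hp, hiq, hqj⟩ := hx
  dsimp only at hij hq hp hiq hqj
  set T : Finset ℝ := Z ∪ Finset.univ.image S.theta with hT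
  have hTm : ∀ w, w ∈ T ↔ w ∈ (↑Z : Set ℝ) ∪ Set.range S.theta := by
    intro w; simp [hT]
  have hZT : ∀ w ∈ Z, w ∈ T := fun w hw => by simp [hT, hw]
  have hθT : ∀ k, S.theta k ∈ T := fun k => by simp [hT]
  by_cases hne : (T.filter fun w => w ∈ Set.uIcc q p).Nonempty
  · obtain ⟨z, hz, hzmin⟩ := Finset.exists_min_image _ (fun w => |w - p|) hne
    rw [Finset.mem_filter] at hz
    obtain ⟨hzT, hzI⟩ := hz
    have hz01 : z ∈ Set.Icc (0 : ℝ) 1 := Set.uIcc_subset_Icc hq hp hzI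
    have hmove : ∀ k, U k p ≤ U k z := by
      intro k
      refine usc_move Z (U k) (hpc k) (husc k) p z hp hz01 ?_
      intro w hw hwI
      have hm := hzmin w (by
        rw [Finset.mem_filter]
        refine ⟨hZT w hw, ?_⟩
        exact Set.uIcc_subset_uIcc Set.right_mem_uIcc hzI hwI)
      rcases le_total p z with hc | hc
      · rw [Set.uIcc_of_le hc] at hwI
        rw [abs_of_nonneg (by linarith : 0 ≤ z - p),
          abs_of_nonneg (by linarith [hwI.1] : 0 ≤ w - p)] at hm
        linarith [hwI.2]
      · rw [Set.uIcc_of_ge hc] at hwI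
        rw [abs_of_nonpos (by linarith : z - p ≤ 0),
          abs_of_nonpos (by linarith [hwI.2] : w - p ≤ 0)] at hm
        linarith [hwI.1]
    have hr := ratio_mem S i j q hiq hqj
    refine ⟨(i, j, q, z), (i, j, q, z), 1, 0, by norm_num, le_rfl, ⟨hij, hq, hz01, hiq, hqj⟩,
      ⟨hij, hq, hz01, hiq, hqj⟩, (hTm z).1 hzT, (hTm z).1 hzT, ?_, ?_, ?_⟩
    · simp only [one_mul, zero_mul, add_zero]
      refine Real.rpow_le_rpow (abs_nonneg _) ?_ (by linarith)
      have := Set.abs_sub_left_of_mem_uIcc hzI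
      rw [abs_sub_comm q z, abs_sub_comm q p]
      exact this
    · intro k; simp [contrib]
    · simp only [one_mul, zero_mul, add_zero, utilT]
      have := mul_le_mul_of_nonneg_left (hmove i) hr.1
      have := mul_le_mul_of_nonneg_left (hmove j) (sub_nonneg.2 hr.2)
      linarith
  · have hno : ∀ w ∈ T, w ∉ Set.uIcc q p := by
      intro w hw hwI
      exact hne ⟨w, by rw [Finset.mem_filter]; exact ⟨hw, hwI⟩⟩
    have hqT : q ∉ T := fun h => hno q h Set.left_mem_uIcc
    have hiq' : S.theta i < q := lt_of_le_of_ne hiq fun h => hqT (h ▸ hθT i)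
    have hqj' : q < S.theta j := lt_of_le_of_ne hqj fun h => hqT (h ▸ hθT j)
    obtain ⟨L, hL, hLmax⟩ := Finset.exists_max_image (T.filter fun w => w < q) id
      ⟨S.theta i, by rw [Finset.mem_filter]; exact ⟨hθT i, hiq'⟩⟩
    obtain ⟨H, hH, hHmin⟩ := Finset.exists_min_image (T.filter fun w => q < w) id
      ⟨S.theta j, by rw [Finset.mem_filter]; exact ⟨hθT j, hqj'⟩⟩
    simp only [Finset.mem_filter, id] at hL hH hLmax hHmin
    have hiL : S.theta i ≤ L := hLmax _ ⟨hθT i, hiq'⟩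
    have hHj : H ≤ S.theta j := hHmin _ ⟨hθT j, hqj'⟩
    have hL01 : L ∈ Set.Icc (0 : ℝ) 1 := ⟨(S.theta_mem i).1.trans hiL, hL.2.le.trans hq.2⟩
    have hH01 : H ∈ Set.Icc (0 : ℝ) 1 := ⟨hq.1.trans hH.2.le, hHj.trans (S.theta_mem j).2⟩
    have hLq := hL.2
    have hqH := hH.2
    have hnoL : ¬ p ≤ L := fun h => hno L hL.1 (Set.mem_uIcc.2 (Or.inr ⟨h, hLq.le⟩))
    have hnoH : ¬ H ≤ p := fun h => hno H hH.1 (Set.mem_uIcc.2 (Or.inl ⟨hqH.le, h⟩))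
    have hmL : ∀ k, U k p ≤ U k L := by
      intro k
      refine usc_move Z (U k) (hpc k) (husc k) p L hp hL01 ?_
      intro w hw hwI
      rw [Set.uIcc_of_ge (by linarith)] at hwI
      refine le_antisymm (hLmax w ⟨hZT w hw, ?_⟩) hwI.1
      by_contra hc
      exact hno w (hZT w hw) (Set.mem_uIcc.2 (Or.inl ⟨by linarith, hwI.2⟩))
    have hmH : ∀ k, U k p ≤ U k H := by
      intro k
      refine usc_move Z (U k) (hpc k) (husc k) p H hp hH01 ?_
      intro w hw hwI
      rw [Set.uIcc_of_le (by linarith)] at hwI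
      refine le_antisymm hwI.2 (hHmin w ⟨hZT w hw, ?_⟩)
      by_contra hc
      exact hno w (hZT w hw) (Set.mem_uIcc.2 (Or.inr ⟨hwI.1, by linarith⟩))
    have hrL := ratio_mem S i j L hiL (by linarith)
    have hrH := ratio_mem S i j H (by linarith) hHj
    have hHL : 0 < H - L := by linarith
    have hα : 0 ≤ (H - q) / (H - L) := div_nonneg (by linarith) hHL.le
    have hβ : 0 ≤ (q - L) / (H - L) := div_nonneg (by linarith) hHL.le
    have hsum : (H - q) / (H - L) + (q - L) / (H - L) = 1 := by field_simp; ring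
    have hrat : (H - q) / (H - L) * ratio S i j L + (q - L) / (H - L) * ratio S i j H
        = ratio S i j q := by
      have hd : S.theta j - S.theta i ≠ 0 := by linarith
      simp only [ratio, if_pos (hiq'.trans hqj')]
      field_simp
      ring
    generalize (H - q) / (H - L) = α at *
    generalize (q - L) / (H - L) = β at *
    refine ⟨(i, j, L, L), (i, j, H, H), α, β, hα, hβ, ⟨hij, hL01, hL01, hiL, by simp; linarith⟩,
      ⟨hij, hH01, hH01, by simp; linarith, hHj⟩, (hTm L).1 hL.1, (hTm H).1 hH.1, ?_, ?_, ?_⟩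
    · simp only [sub_self, abs_zero, Real.zero_rpow (show t ≠ 0 by linarith), mul_zero, add_zero]
      positivity
    · intro k
      simp only [contrib]
      rw [← hrat]
      split_ifs <;> first | ring1 | linear_combination hsum
    · simp only [utilT]
      have e1 := mul_le_mul_of_nonneg_left (add_le_add
        (mul_le_mul_of_nonneg_left (hmL i) hrL.1)
        (mul_le_mul_of_nonneg_left (hmL j) (sub_nonneg.2 hrL.2))) hα
      have e2 := mul_le_mul_of_nonneg_left (add_le_add
        (mul_le_mul_of_nonneg_left (hmH i) hrH.1)
        (mul_le_mul_of_nonneg_left (hmH j) (sub_nonneg.2 hrH.2))) hβ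
      refine le_trans (le_of_eq ?_) (add_le_add e1 e2)
      rw [← hrat]
      linear_combination (-(U j p)) * hsum

/-- If every indirect utility is piecewise constant (with all
discontinuity points in the finite set `Z`) and upper semicontinuous, then every
feasible bi-event post-processing plan can be improved to a feasible plan whose
predictions all lie in `Z ∪ {θ_1, …, θ_n}`. -/
theorem statement13 {n : ℕ} (S : Setup n) (t ε : ℝ) (ht : 1 ≤ t) (hε : 0 ≤ ε)
    (U : Fin n → ℝ → ℝ) (hU0 : ∀ i, ∀ p ∈ Set.Icc (0 : ℝ) 1, 0 ≤ U i p)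
    (Z : Finset ℝ)
    (hpc : ∀ i, PiecewiseConstWrt Z (U i))
    (husc : ∀ i, UpperSemicontinuousOn (U i) (Set.Icc (0 : ℝ) 1))
    (χ : BiTuple n →₀ ℝ) (hχ : FeasibleBiPlan S t ε χ) :
    ∃ χ' : BiTuple n →₀ ℝ, FeasibleBiPlan S t ε χ' ∧ biObj S U χ ≤ biObj S U χ' ∧
      ∀ x ∈ χ'.support, x.2.2.2 ∈ (↑Z : Set ℝ) ∪ Set.range S.theta := by
  classical
  obtain ⟨⟨hnn, hok⟩, hcost, hlam⟩ := hχ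
  have key := fun x : BiTuple n => fun hx : x ∈ χ.support =>
    split_tuple S t ht U Z hpc husc x (hok x hx)
  choose! a b α β hα hβ ha hb hap hbp hc hctr hu using key
  set ν : BiTuple n → BiTuple n →₀ ℝ := fun x =>
    Finsupp.single (a x) (α x) + Finsupp.single (b x) (β x) with hν
  set χ' : BiTuple n →₀ ℝ := ∑ x ∈ χ.support, χ x • ν x with hχ'
  have hlin : ∀ f : BiTuple n → ℝ, ∑ y ∈ χ'.support, χ' y * f y =
      ∑ x ∈ χ.support, χ x * (α x * f (a x) + β x * f (b x)) := by
    intro f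
    rw [← lin_eq, hχ', map_sum]
    refine Finset.sum_congr rfl fun x _ => ?_
    rw [map_smul, hν, map_add]
    simp only [lin, Finsupp.linearCombination_single, smul_eq_mul]
  have hsupp : ∀ y ∈ χ'.support, ∃ x ∈ χ.support, y = a x ∨ y = b x := by
    intro y hy
    by_contra hcon
    push Not at hcon
    rw [Finsupp.mem_support_iff] at hy
    apply hy
    rw [hχ', Finsupp.finsetSum_apply]
    refine Finset.sum_eq_zero fun x hx => ?_
    simp [hν, Finsupp.single_apply, (hcon x hx).1.symm, (hcon x hx).2.symm]
  refine ⟨χ', ⟨⟨?_, ?_⟩, ?_, ?_⟩, ?_, ?_⟩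
  · intro y
    rw [hχ', Finsupp.finsetSum_apply]
    refine Finset.sum_nonneg fun x hx => ?_
    have h1 := hα x hx
    have h2 := hβ x hx
    simp only [hν, Finsupp.smul_apply, Finsupp.add_apply, Finsupp.single_apply, smul_eq_mul]
    refine mul_nonneg (hnn x) (add_nonneg ?_ ?_) <;> split_ifs <;> first | assumption | exact le_rfl
  · intro y hy
    obtain ⟨x, hx, rfl | rfl⟩ := hsupp y hy
    · exact ha x hx
    · exact hb x hx
  · rw [hlin fun x => |x.2.2.1 - x.2.2.2| ^ t]
    refine le_trans (Finset.sum_le_sum fun x hx => ?_) hcost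
    exact mul_le_mul_of_nonneg_left (hc x hx) (hnn x)
  · intro i
    rw [hlin fun x => contrib S x i, ← hlam i]
    refine Finset.sum_congr rfl fun x hx => ?_
    rw [hctr x hx i]
  · change ∑ x ∈ χ.support, χ x * utilT S U x ≤ ∑ x ∈ χ'.support, χ' x * utilT S U x
    rw [hlin (utilT S U)]
    exact Finset.sum_le_sum fun x hx => mul_le_mul_of_nonneg_left (hu x hx) (hnn x)
  · intro y hy
    obtain ⟨x, hx, rfl | rfl⟩ := hsupp y hy
    · exact hap x hx
    · exact hbp x hx

end PersuasiveCalibration
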